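/- arXiv:math/0412067 — 2 statements merged into one kernel-verified Lean document; each statement's English description precedes it below -/
import Mathlib

section
/- Define γ_q := ∑_{n=1}^{∞} q^n/[n]_q + (1−q)·(−1/2 − log(1−q)/log q) for real q with 0 < q < 1. Then lim_{q → 1⁻} γ_q = γ, the Euler–Mascheroni constant, the limit being taken over real q increasing to 1. -/
/-!
Write `G_n(q) = 1 + q + ⋯ + q^n = [n+1]_q`. The correction term in `γ_q` is, up to `-(1-q)/2`, minus
the integral over `[1, ∞)` of `x ↦ q^x/[x]_q`; that integral is `∑ c (log G_{n+1} - log G_n)` with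
`c = (1-q)/(-log q)`. Hence
`γ_q = ∑_n (q^(n+1)/G_n - c (log G_{n+1} - log G_n)) - (1-q)/2` (`gammaQ_eq`).

As `q → 1` the `n`-th term tends to `1/(n+1) - (log (n+2) - log (n+1))`, and these limits sum to the
Euler–Mascheroni constant (`tsum_limit`). The exchange of limit and sum is dominated convergence:
from `q ≤ c ≤ 1` and `1 - 1/x ≤ log x ≤ x - 1`, the `n`-th term lies between `0` and
`q^(n+1)/G_n - q^(n+2)/G_{n+1} = q^(n+1)/(G_n G_{n+1})`, which is at most `1/(n+1)^2` because
`G_n ≥ (n+1) q^(n/2)` by AM-GM (`geom_sq_ge`).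
-/

/-- `γ_q = ∑_{n=1}^∞ q^n/[n]_q + (1−q)(−1/2 − log(1−q)/log q)` for real `0 < q < 1`,
where `[n]_q = (1−q^n)/(1−q)`. -/
noncomputable def gammaQ (q : ℝ) : ℝ :=
  (∑' n : ℕ, q ^ ((n : ℕ) + 1) / ((1 - q ^ ((n : ℕ) + 1)) / (1 - q)))
    + (1 - q) * (-(1 / 2) - Real.log (1 - q) / Real.log q)

open Filter Topology

namespace GammaQ

/-- The `q`-integer `[n+1]_q = 1 + q + ⋯ + q^n`, as a polynomial in `q`. -/
noncomputable def G (q : ℝ) (n : ℕ) : ℝ := ∑ i ∈ Finset.range (n + 1), q ^ i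

/-- The factor `(1-q)/(-log q)`, which tends to `1` as `q → 1`. -/
noncomputable def c (q : ℝ) : ℝ := (1 - q) / (-Real.log q)

lemma G_zero (q : ℝ) : G q 0 = 1 := by simp [G]

lemma G_succ (q : ℝ) (n : ℕ) : G q (n + 1) = G q n + q ^ (n + 1) := by
  simp [G, Finset.sum_range_succ _ (n + 1)]

lemma G_mul (q : ℝ) (n : ℕ) : G q n * (1 - q) = 1 - q ^ (n + 1) := by
  have := geom_sum_mul q (n + 1)
  unfold G
  linarith

lemma G_succ' (q : ℝ) (n : ℕ) : G q (n + 1) = 1 + q * G q n := by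
  linarith [G_succ q n, G_mul q n]

lemma one_le_G {q : ℝ} (hq : 0 < q) (n : ℕ) : 1 ≤ G q n := by
  induction n with
  | zero => rw [G_zero]
  | succ n ih => rw [G_succ]; linarith [pow_pos hq (n + 1)]

/-- AM-GM for `1 + q + ⋯ + q^n` with `q = s^2`, by pairing the first and last summands. -/
lemma geom_ge (s : ℝ) (n : ℕ) : ((n : ℝ) + 1) * s ^ n ≤ G (s ^ 2) n := by
  induction n using Nat.twoStepInduction with
  | zero => simp [G_zero]
  | one => rw [G_succ, G_zero]; norm_num; nlinarith [sq_nonneg (s - 1)]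
  | more n ih _ =>
    have h : G (s ^ 2) (n + 2) = 1 + s ^ 2 * G (s ^ 2) n + (s ^ (n + 2)) ^ 2 := by
      rw [G_succ', G_succ]; ring
    have h2 := mul_le_mul_of_nonneg_left ih (sq_nonneg s)
    have h3 : ((n + 2 : ℕ) : ℝ) + 1 = (n + 1) + 2 := by push_cast; ring
    have h4 : s ^ 2 * (((n : ℝ) + 1) * s ^ n) = ((n : ℝ) + 1) * s ^ (n + 2) := by ring
    rw [h, h3]
    nlinarith [sq_nonneg (s ^ (n + 2) - 1)]

lemma geom_sq_ge {q : ℝ} (hq : 0 < q) (n : ℕ) : ((n : ℝ) + 1) ^ 2 * q ^ n ≤ G q n ^ 2 := by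
  have h := geom_ge (√q) n
  rw [Real.sq_sqrt hq.le] at h
  have h2 := pow_le_pow_left₀ (by positivity) h 2
  have h3 : (((n : ℝ) + 1) * √q ^ n) ^ 2 = ((n : ℝ) + 1) ^ 2 * q ^ n := by
    rw [mul_pow, ← pow_mul, mul_comm n 2, pow_mul, Real.sq_sqrt hq.le]
  linarith

lemma c_bounds {q : ℝ} (h0 : 0 < q) (h1 : q < 1) : q ≤ c q ∧ c q ≤ 1 := by
  have hl : 0 < -Real.log q := by linarith [Real.log_neg h0 h1]
  unfold c
  constructor
  · rw [le_div_iff₀ hl]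
    have h := Real.one_sub_inv_le_log_of_pos h0
    have h2 := mul_le_mul_of_nonneg_left h h0.le
    rw [mul_sub, mul_inv_cancel₀ h0.ne'] at h2
    linarith
  · rw [div_le_one hl]
    linarith [Real.log_le_sub_one_of_pos h0]

/-- The `n`-th term of the series for `γ_q` after the correction is spread over the sum. -/
noncomputable def term (q : ℝ) (n : ℕ) : ℝ :=
  q ^ (n + 1) / G q n - c q * (Real.log (G q (n + 1)) - Real.log (G q n))

lemma term_bound {q : ℝ} (h0 : 0 < q) (h1 : q < 1) (n : ℕ) :
    ‖term q n‖ ≤ 1 / ((n : ℝ) + 1) ^ 2 := by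
  obtain ⟨hc0, hc1⟩ := c_bounds h0 h1
  have hG : 0 < G q n := by linarith [one_le_G h0 n]
  have hG' : 0 < G q (n + 1) := by linarith [one_le_G h0 (n + 1)]
  have hp : 0 < q ^ (n + 1) := pow_pos h0 _
  have hlog : Real.log (G q (n + 1)) - Real.log (G q n) = Real.log (G q (n + 1) / G q n) :=
    (Real.log_div hG'.ne' hG.ne').symm
  have hup : Real.log (G q (n + 1)) - Real.log (G q n) ≤ q ^ (n + 1) / G q n := by
    rw [hlog]
    refine (Real.log_le_sub_one_of_pos (by positivity)).trans_eq ?_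
    rw [G_succ]; field_simp; ring
  have hlo : q ^ (n + 1) / G q (n + 1) ≤ Real.log (G q (n + 1)) - Real.log (G q n) := by
    rw [hlog]
    refine le_trans (le_of_eq ?_) (Real.one_sub_inv_le_log_of_pos (by positivity))
    rw [inv_div, eq_sub_iff_add_eq, ← add_div, div_eq_one_iff_eq hG'.ne', G_succ]
    ring
  have hlo0 : 0 ≤ Real.log (G q (n + 1)) - Real.log (G q n) := le_trans (by positivity) hlo
  have hnn : 0 ≤ term q n := by
    unfold term
    nlinarith
  rw [Real.norm_of_nonneg hnn]
  have hdiff : q ^ (n + 1) / G q n - q * (q ^ (n + 1) / G q (n + 1))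
      = q ^ (n + 1) / (G q n * G q (n + 1)) := by
    have : G q (n + 1) - q * G q n = 1 := by rw [G_succ']; ring
    field_simp
    linear_combination this
  have hle : term q n ≤ q ^ (n + 1) / (G q n * G q (n + 1)) := by
    rw [← hdiff]
    unfold term
    have := mul_le_mul hc0 hlo (by positivity) (h0.le.trans hc0)
    linarith
  refine hle.trans ?_
  rw [div_le_div_iff₀ (by positivity) (by positivity)]
  have h3 := geom_sq_ge h0 n
  have h4 : q ^ (n + 1) ≤ q ^ n := pow_le_pow_of_le_one h0.le h1.le (Nat.le_succ n)
  have h5 : G q n ≤ G q (n + 1) := by rw [G_succ]; linarith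
  have h6 : ((n : ℝ) + 1) ^ 2 * q ^ (n + 1) ≤ ((n : ℝ) + 1) ^ 2 * q ^ n := by gcongr
  nlinarith

lemma hasSum_log {q : ℝ} (h0 : 0 < q) (h1 : q < 1) :
    HasSum (fun n ↦ Real.log (G q (n + 1)) - Real.log (G q n)) (-Real.log (1 - q)) := by
  rw [hasSum_iff_tendsto_nat_of_nonneg]
  · simp_rw [Finset.sum_range_sub (fun n ↦ Real.log (G q n)), G_zero, Real.log_one, sub_zero]
    rw [← Real.log_inv]
    have hs : Tendsto (fun n ↦ G q n) atTop (𝓝 (1 - q)⁻¹) :=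
      (hasSum_geometric_of_lt_one h0.le h1).tendsto_sum_nat.comp (tendsto_add_atTop_nat 1)
    exact hs.log (inv_ne_zero (by linarith))
  · intro n
    rw [sub_nonneg]
    apply Real.log_le_log (by linarith [one_le_G h0 n])
    rw [G_succ]; linarith [pow_pos h0 (n + 1)]

lemma gammaQ_eq {q : ℝ} (h0 : 0 < q) (h1 : q < 1) :
    gammaQ q = ∑' n, term q n - (1 - q) / 2 := by
  have hf : ∀ n : ℕ, q ^ (n + 1) / ((1 - q ^ (n + 1)) / (1 - q)) = q ^ (n + 1) / G q n := by
    intro n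
    rw [← G_mul, mul_div_cancel_right₀ _ (by linarith)]
  have hsf : Summable fun n : ℕ ↦ q ^ (n + 1) / G q n := by
    refine Summable.of_nonneg_of_le (fun n ↦ ?_) (fun n ↦ ?_)
      ((summable_nat_add_iff 1).2 (summable_geometric_of_lt_one h0.le h1))
    · have := one_le_G h0 n
      positivity
    · exact div_le_self (by positivity) (one_le_G h0 n)
  have hsl := (hasSum_log h0 h1).mul_left (c q)
  have ht : ∑' n, term q n = ∑' n : ℕ, q ^ (n + 1) / G q n - c q * (-Real.log (1 - q)) :=
    (hsf.hasSum.sub hsl).tsum_eq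
  rw [ht]
  unfold gammaQ c
  simp_rw [hf]
  have := (Real.log_neg h0 h1).ne
  field_simp
  ring

lemma tsum_limit : ∑' n : ℕ, (1 / ((n : ℝ) + 1) - (Real.log (n + 2) - Real.log (n + 1)))
    = Real.eulerMascheroniConstant := by
  refine HasSum.tsum_eq ?_
  rw [hasSum_iff_tendsto_nat_of_nonneg]
  · refine Real.tendsto_harmonic_sub_log_add_one.congr fun n ↦ ?_
    induction n with
    | zero => simp
    | succ n ih =>
      rw [Finset.sum_range_succ, ← ih, harmonic_succ]
      push_cast
      rw [show (n : ℝ) + 1 + 1 = n + 2 by ring]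
      ring
  · intro n
    have hn : (0 : ℝ) < n + 1 := by positivity
    rw [← Real.log_div (by positivity) hn.ne']
    have h := Real.log_le_sub_one_of_pos (x := ((n : ℝ) + 2) / (n + 1)) (by positivity)
    have e : ((n : ℝ) + 2) / (n + 1) - 1 = 1 / (n + 1) := by field_simp; ring
    linarith

lemma tendsto_c : Tendsto c (𝓝[Set.Ioo 0 1] 1) (𝓝 1) := by
  refine tendsto_of_tendsto_of_tendsto_of_le_of_le' (g := id) (h := fun _ ↦ 1)
    (tendsto_id.mono_left nhdsWithin_le_nhds) tendsto_const_nhds ?_ ?_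
  · filter_upwards [self_mem_nhdsWithin] with q hq using (c_bounds hq.1 hq.2).1
  · filter_upwards [self_mem_nhdsWithin] with q hq using (c_bounds hq.1 hq.2).2

lemma tendsto_G (n : ℕ) : Tendsto (fun q ↦ G q n) (𝓝[Set.Ioo 0 1] 1) (𝓝 ((n : ℝ) + 1)) := by
  have hc : Continuous fun q ↦ G q n := by unfold G; fun_prop
  have h := hc.tendsto 1
  simp only [G, one_pow, Finset.sum_const, Finset.card_range, nsmul_eq_mul, mul_one,
    Nat.cast_add, Nat.cast_one] at h
  exact h.mono_left nhdsWithin_le_nhds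

lemma tendsto_term (n : ℕ) : Tendsto (fun q ↦ term q n) (𝓝[Set.Ioo 0 1] 1)
    (𝓝 (1 / ((n : ℝ) + 1) - (Real.log (n + 2) - Real.log (n + 1)))) := by
  have hn : (n : ℝ) + 1 ≠ 0 := by positivity
  have hn' : (n : ℝ) + 2 ≠ 0 := by positivity
  have hp : Tendsto (fun q : ℝ ↦ q ^ (n + 1)) (𝓝[Set.Ioo 0 1] 1) (𝓝 1) := by
    have := (continuous_pow (M := ℝ) (n + 1)).tendsto 1
    rw [one_pow] at this
    exact this.mono_left nhdsWithin_le_nhds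
  have hG' := tendsto_G (n + 1)
  rw [show ((n + 1 : ℕ) : ℝ) + 1 = n + 2 by push_cast; ring] at hG'
  have := (hp.div (tendsto_G n) hn).sub
    (tendsto_c.mul ((hG'.log hn').sub ((tendsto_G n).log hn)))
  rw [one_mul] at this
  exact this

end GammaQ

/-- `lim_{q↑1} γ_q = γ`, the Euler–Mascheroni constant, the limit being over real `q`
increasing to `1` (within `(0,1)`). -/
theorem tendsto_gammaQ_eulerMascheroni :
    Filter.Tendsto gammaQ (nhdsWithin 1 (Set.Ioo 0 1))
      (nhds Real.eulerMascheroniConstant) := by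
  have hb : Summable fun n : ℕ ↦ 1 / ((n : ℝ) + 1) ^ 2 := by
    have := (summable_nat_add_iff 1).2 (Real.summable_one_div_nat_pow.2 (one_lt_two))
    simpa using this
  have hs : Tendsto (fun q ↦ ∑' n, GammaQ.term q n) (𝓝[Set.Ioo 0 1] 1)
      (𝓝 Real.eulerMascheroniConstant) := by
    rw [← GammaQ.tsum_limit]
    refine tendsto_tsum_of_dominated_convergence hb GammaQ.tendsto_term ?_
    filter_upwards [self_mem_nhdsWithin] with q hq n using GammaQ.term_bound hq.1 hq.2 n
  have hz : Tendsto (fun q : ℝ ↦ (1 - q) / 2) (𝓝[Set.Ioo 0 1] 1) (𝓝 0) := by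
    have hc : Continuous fun q : ℝ ↦ (1 - q) / 2 := by fun_prop
    have := hc.tendsto 1
    rw [sub_self, zero_div] at this
    exact this.mono_left nhdsWithin_le_nhds
  have h := hs.sub hz
  rw [sub_zero] at h
  refine h.congr' ?_
  filter_upwards [self_mem_nhdsWithin] with q hq using (GammaQ.gammaQ_eq hq.1 hq.2).symm
end

section
/- Let z > 0 be real. Then lim_{q → 1⁻} Γ̃_q(z) = Γ(z), where Γ is the Euler gamma function and the limit is taken over real q increasing to 1. -/
/-!
The proof is a Bohr–Mollerup argument carried out uniformly in `q`.

For `q ∈ (0, 1)` the function `Fq q` vanishes at `1` and satisfies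
`Fq q (z + 1) = Fq q z + q^{-z} (log [z]_q - z log q)` (`Fq_add_one`): the difference of the two
series is a logarithm series, and the closed-form terms cancel. The increment tends to `log z` as
`q → 1` (`tendsto_stepFq`). For `q ∈ [1/2, 1)` the function `Fq q` is moreover convex on `(0, ∞)`
(`convexOn_Fq`).

As in the proof of the Bohr–Mollerup theorem, convexity and the functional equation trap `Fq q x`,
for `0 < x ≤ 1` and each fixed `n`, between two finite combinations of increments. Letting `q → 1`
turns these into `log Γ`-approximants, both of which tend to `log Γ(x)` as `n → ∞`. The functional
equation extends this to all `x > 0` (`tendsto_log_Gamma_of_step`).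
-/

/-- The logarithm `F_q(z) = log Γ̃_q(z)` of the `q`-gamma function associated with the
`q`-Hurwitz zeta function, given by its explicit closed form: for real `z > 0`,
`F_q(z) = ∑_{n=2}^∞ (1/n)(q^{z(n−1)} − q^{n−1})/(1 − q^{n−1}) − z + 1
  + ((q^{−z}(1 − (1−q)z) − 1)/(1−q)²) q log q + ((1 − q^{1−z})/(1−q)) log(1−q)`
(real powers of `q` via `rpow`). -/
noncomputable def Fq (q z : ℝ) : ℝ :=
  (∑' n : ℕ, (1 / ((n : ℝ) + 2)) *
      (q ^ (z * ((n : ℝ) + 1)) - q ^ ((n : ℝ) + 1)) / (1 - q ^ ((n : ℝ) + 1)))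
    - z + 1
    + ((q ^ (-z) * (1 - (1 - q) * z) - 1) / (1 - q) ^ 2) * q * Real.log q
    + ((1 - q ^ (1 - z)) / (1 - q)) * Real.log (1 - q)

/-- The `q`-gamma function `Γ̃_q(z) = exp F_q(z)` associated with the `q`-Hurwitz zeta
function. -/
noncomputable def GammaQ (q z : ℝ) : ℝ := Real.exp (Fq q z)

/-! ### The abstract Bohr–Mollerup sandwich -/

section Sandwich

variable {f L : ℝ → ℝ}

lemma add_nat_eq_of_step (hstep : ∀ y, 0 < y → f (y + 1) = f y + L y) {x : ℝ} (hx : 0 < x)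
    (n : ℕ) : f (x + n) = f x + ∑ m ∈ Finset.range n, L (x + m) := by
  induction n with
  | zero => simp
  | succ n ih =>
    have h : x + ((n + 1 : ℕ) : ℝ) = x + n + 1 := by push_cast; ring
    rw [h, hstep _ (by positivity), ih, Finset.sum_range_succ]
    ring

/-- Convexity between `n + 1` and `n + 2` bounds `f (n + 1 + x)` from above; the functional
equation then carries the bound down to `f x`. -/
lemma le_of_convex_step (hc : ConvexOn ℝ (Set.Ioi 0) f)
    (hstep : ∀ y, 0 < y → f (y + 1) = f y + L y) (h1 : f 1 = 0) {x : ℝ} (hx : 0 < x)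
    (hx1 : x ≤ 1) (n : ℕ) :
    f x ≤ ∑ m ∈ Finset.range n, L (1 + m) + x * L (1 + n)
      - ∑ m ∈ Finset.range (n + 1), L (x + m) := by
  have hn : (0 : ℝ) < 1 + n := by positivity
  have e1 := add_nat_eq_of_step hstep one_pos n
  have e2 := add_nat_eq_of_step hstep hx (n + 1)
  have e3 := hstep _ hn
  have hn2 : (0 : ℝ) < 1 + n + 1 := by linarith
  have c := hc.2 (Set.mem_Ioi.2 hn) (Set.mem_Ioi.2 hn2) (by linarith : 0 ≤ 1 - x) hx.le
    (by ring)
  simp only [smul_eq_mul] at c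
  have e : (1 - x) * (1 + (n : ℝ)) + x * (1 + n + 1) = x + ((n + 1 : ℕ) : ℝ) := by
    push_cast; ring
  rw [e, e3] at c
  nlinarith

/-- Convexity makes the slope of `f` on `[n, n + 1]` at most that on `[n + 1, n + 1 + x]`; the
functional equation then carries the bound down to `f x`. -/
lemma ge_of_convex_step (hc : ConvexOn ℝ (Set.Ioi 0) f)
    (hstep : ∀ y, 0 < y → f (y + 1) = f y + L y) (h1 : f 1 = 0) {x : ℝ} (hx : 0 < x)
    {n : ℕ} (hn : 0 < n) :
    ∑ m ∈ Finset.range n, L (1 + m) + x * L n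
      - ∑ m ∈ Finset.range (n + 1), L (x + m) ≤ f x := by
  have hn' : (0 : ℝ) < n := by exact_mod_cast hn
  have e1 := add_nat_eq_of_step hstep one_pos n
  have e2 := add_nat_eq_of_step hstep hx (n + 1)
  have e3 := hstep _ hn'
  have c := hc.slope_mono_adjacent (x := (n : ℝ)) (y := (n : ℝ) + 1) (z := n + 1 + x) hn'
    (by simp only [Set.mem_Ioi]; linarith) (by linarith) (by linarith)
  rw [show (n : ℝ) + 1 - n = 1 by ring, show (n : ℝ) + 1 + x - (n + 1) = x by ring, div_one,
    le_div_iff₀ hx, show (n : ℝ) + 1 + x = x + ((n + 1 : ℕ) : ℝ) by push_cast; ring] at c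
  rw [show (1 : ℝ) + n = n + 1 by ring] at e1
  nlinarith

end Sandwich

lemma sum_log_one_add (n : ℕ) :
    ∑ m ∈ Finset.range n, Real.log (1 + m) = Real.log (n.factorial) := by
  induction n with
  | zero => simp
  | succ n ih =>
    rw [Finset.sum_range_succ, ih, Nat.factorial_succ, Nat.cast_mul,
      Real.log_mul (by positivity) (by positivity)]
    push_cast
    rw [add_comm (1 : ℝ)]; ring

/-- A version of the Bohr–Mollerup theorem for families: convex functions normalised at `1` whose
unit increments converge pointwise to `log` converge pointwise to `log Γ`. -/
lemma tendsto_log_Gamma_of_step {ι : Type*} {l : Filter ι} {f L : ι → ℝ → ℝ}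
    (hc : ∀ᶠ i in l, ConvexOn ℝ (Set.Ioi 0) (f i))
    (hstep : ∀ᶠ i in l, ∀ y, 0 < y → f i (y + 1) = f i y + L i y)
    (h1 : ∀ᶠ i in l, f i 1 = 0)
    (hL : ∀ y, 0 < y → Filter.Tendsto (fun i => L i y) l (nhds (Real.log y)))
    {x : ℝ} (hx : 0 < x) :
    Filter.Tendsto (fun i => f i x) l (nhds (Real.log (Real.Gamma x))) := by
  -- The case `x ≤ 1`: for fixed `n` both sandwich bounds converge, and their limits are
  -- `logGammaSeq x n` and `logGammaSeq x n + x * (log (1 + n) - log n)`.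
  have base : ∀ x : ℝ, 0 < x → x ≤ 1 →
      Filter.Tendsto (fun i => f i x) l (nhds (Real.log (Real.Gamma x))) := by
    intro x hx hx1
    have hlow := Real.BohrMollerup.tendsto_log_gamma hx
    have hup : Filter.Tendsto (fun n : ℕ => Real.BohrMollerup.logGammaSeq x n
        + x * (Real.log ((n : ℝ) + 1) - Real.log n)) Filter.atTop
        (nhds (Real.log (Real.Gamma x))) := by
      simpa using hlow.add (Real.tendsto_log_nat_add_one_sub_log.const_mul x)
    have hsum : ∀ (y : ℝ) (n : ℕ), 0 < y → Filter.Tendsto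
        (fun i => ∑ m ∈ Finset.range n, L i (y + m)) l
        (nhds (∑ m ∈ Finset.range n, Real.log (y + m))) := fun y n hy =>
      tendsto_finsetSum _ fun m _ => hL _ (by positivity)
    rw [tendsto_order]
    constructor
    · intro a ha
      obtain ⟨n, hn, hn0⟩ :=
        ((hlow.eventually (lt_mem_nhds ha)).and (Filter.eventually_gt_atTop 0)).exists
      have hn' : (0 : ℝ) < n := by exact_mod_cast hn0
      have ht := ((hsum 1 n one_pos).add ((hL _ hn').const_mul x)).sub (hsum x (n + 1) hx)
      rw [sum_log_one_add, add_comm (Real.log _)] at ht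
      filter_upwards [ht.eventually (lt_mem_nhds hn), hc, hstep, h1] with i hi hci hsi h1i
      exact hi.trans_le (ge_of_convex_step hci hsi h1i hx hn0)
    · intro a ha
      obtain ⟨n, hn⟩ := (hup.eventually (gt_mem_nhds ha)).exists
      have ht := ((hsum 1 n one_pos).add ((hL (1 + (n : ℝ)) (by positivity)).const_mul x)).sub
        (hsum x (n + 1) hx)
      have e : Real.BohrMollerup.logGammaSeq x n + x * (Real.log ((n : ℝ) + 1) - Real.log n) =
          ∑ m ∈ Finset.range n, Real.log (1 + m) + x * Real.log (1 + n)
            - ∑ m ∈ Finset.range (n + 1), Real.log (x + m) := by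
        rw [sum_log_one_add, Real.BohrMollerup.logGammaSeq, add_comm (1 : ℝ)]; ring
      rw [e] at hn
      filter_upwards [ht.eventually (gt_mem_nhds hn), hc, hstep, h1] with i hi hci hsi h1i
      exact (le_of_convex_step hci hsi h1i hx hx1 n).trans_lt hi
  have ind : ∀ n : ℕ, ∀ x : ℝ, 0 < x → x ≤ n + 1 →
      Filter.Tendsto (fun i => f i x) l (nhds (Real.log (Real.Gamma x))) := by
    intro n
    induction n with
    | zero => intro x hx hxn; exact base x hx (by simpa using hxn)
    | succ n ih =>
      intro x hx hxn
      rcases le_or_gt x 1 with h | h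
      · exact base x hx h
      · have hx' : 0 < x - 1 := by linarith
        have ht := (ih (x - 1) hx' (by push_cast at hxn; linarith)).add (hL _ hx')
        have e : Real.log (Real.Gamma x) = Real.log (Real.Gamma (x - 1)) + Real.log (x - 1) := by
          have := Real.Gamma_add_one hx'.ne'
          rw [sub_add_cancel] at this
          rw [this, Real.log_mul hx'.ne' (Real.Gamma_pos_of_pos hx').ne', add_comm]
        rw [e]
        refine ht.congr' ?_
        filter_upwards [hstep] with i hi
        rw [← hi _ hx', sub_add_cancel]
  obtain ⟨n, hn⟩ := exists_nat_ge x
  exact ind n x hx (by linarith)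

/-! ### The functions `Fq q` -/

section FqFacts

variable {q : ℝ}

lemma rpow_nat_succ_lt_one (h0 : 0 < q) (h1 : q < 1) (n : ℕ) : q ^ ((n : ℝ) + 1) < 1 :=
  Real.rpow_lt_one h0.le h1 (by positivity)

lemma summable_Fq (h0 : 0 < q) (h1 : q < 1) {z : ℝ} (hz : 0 < z) :
    Summable (fun n : ℕ => (1 / ((n : ℝ) + 2)) *
      (q ^ (z * ((n : ℝ) + 1)) - q ^ ((n : ℝ) + 1)) / (1 - q ^ ((n : ℝ) + 1))) := by
  have key : ∀ w : ℝ, 0 < w → Summable (fun n : ℕ => (1 / ((n : ℝ) + 2)) *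
      q ^ (w * ((n : ℝ) + 1)) / (1 - q ^ ((n : ℝ) + 1))) := by
    intro w hw
    have hg : Summable (fun n : ℕ => (q ^ w) ^ n / (1 - q)) :=
      (summable_geometric_of_lt_one (by positivity)
        (Real.rpow_lt_one h0.le h1 hw)).div_const _
    have hlt := rpow_nat_succ_lt_one h0 h1
    refine Summable.of_nonneg_of_le (fun n => ?_) (fun n => ?_) hg
    · have := sub_pos.2 (hlt n)
      positivity
    · have e : q ^ (w * ((n : ℝ) + 1)) ≤ (q ^ w) ^ n := by
        rw [← Real.rpow_natCast, ← Real.rpow_mul h0.le]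
        exact Real.rpow_le_rpow_of_exponent_ge h0 h1.le (by nlinarith)
      have e2 : q ^ ((n : ℝ) + 1) ≤ q := by
        conv_rhs => rw [← Real.rpow_one q]
        exact Real.rpow_le_rpow_of_exponent_ge h0 h1.le (by linarith [n.cast_nonneg (α := ℝ)])
      have e3 : 1 / ((n : ℝ) + 2) ≤ 1 := by
        rw [div_le_one (by positivity)]; linarith [n.cast_nonneg (α := ℝ)]
      have : 0 < 1 - q := by linarith
      have e4 : 1 / ((n : ℝ) + 2) * q ^ (w * ((n : ℝ) + 1)) ≤ (q ^ w) ^ n :=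
        (mul_le_of_le_one_left (by positivity) e3).trans e
      gcongr
  refine ((key z hz).sub (key 1 one_pos)).congr fun n => ?_
  rw [one_mul]; ring

lemma tsum_rpow_div (h0 : 0 < q) (h1 : q < 1) {z : ℝ} (hz : 0 < z) :
    ∑' n : ℕ, (1 / ((n : ℝ) + 2)) * q ^ (z * ((n : ℝ) + 1)) =
      q ^ (-z) * (-Real.log (1 - q ^ z) - q ^ z) := by
  have hp : 0 < q ^ z := by positivity
  have hlt : q ^ z < 1 := Real.rpow_lt_one h0.le h1 hz
  have hs := Real.hasSum_pow_div_log_of_abs_lt_one (x := q ^ z) (by rwa [abs_of_pos hp])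
  have hs' := ((hasSum_nat_add_iff' 1).2 hs).mul_left (q ^ (-z))
  simp only [Finset.sum_range_one, Nat.cast_zero, zero_add, pow_one, div_one] at hs'
  rw [← hs'.tsum_eq]
  refine tsum_congr fun n => ?_
  rw [Real.rpow_mul h0.le, Real.rpow_add_one hp.ne', Real.rpow_natCast, Real.rpow_neg h0.le]
  push_cast
  field_simp
  ring

lemma Fq_one (hq : q ≠ 0) : Fq q 1 = 0 := by
  simp [Fq, Real.rpow_neg_one, inv_mul_cancel₀ hq]

/-- The unit increment of `Fq q` at `z`: `q^{-z} (log [z]_q - z log q)`. -/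
noncomputable def stepFq (q z : ℝ) : ℝ :=
  q ^ (-z) * (Real.log ((1 - q ^ z) / (1 - q)) - z * Real.log q)

lemma Fq_add_one (h0 : 0 < q) (h1 : q < 1) {z : ℝ} (hz : 0 < z) :
    Fq q (z + 1) = Fq q z + stepFq q z := by
  have hq1 : 1 - q ≠ 0 := by linarith
  have hlt : q ^ z < 1 := Real.rpow_lt_one h0.le h1 hz
  have hp : 0 < q ^ z := by positivity
  -- The factor `1 - q ^ (n + 1)` cancels from the difference of the two series.
  have hsub : (∑' n : ℕ, (1 / ((n : ℝ) + 2)) *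
        (q ^ ((z + 1) * ((n : ℝ) + 1)) - q ^ ((n : ℝ) + 1)) / (1 - q ^ ((n : ℝ) + 1)))
      = (∑' n : ℕ, (1 / ((n : ℝ) + 2)) *
        (q ^ (z * ((n : ℝ) + 1)) - q ^ ((n : ℝ) + 1)) / (1 - q ^ ((n : ℝ) + 1)))
        - q ^ (-z) * (-Real.log (1 - q ^ z) - q ^ z) := by
    rw [← tsum_rpow_div h0 h1 hz, eq_sub_iff_add_eq', ← eq_sub_iff_add_eq,
      ← (summable_Fq h0 h1 hz).tsum_sub (summable_Fq h0 h1 (by linarith : 0 < z + 1))]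
    refine tsum_congr fun n => ?_
    have hn : 1 - q ^ ((n : ℝ) + 1) ≠ 0 := by
      linarith [rpow_nat_succ_lt_one h0 h1 n]
    rw [add_mul, one_mul, Real.rpow_add h0 (z * ((n : ℝ) + 1)), ← sub_div, eq_div_iff hn]
    ring
  rw [Fq, Fq, stepFq, hsub, Real.log_div (by linarith) hq1]
  have e1 : q ^ (-(z + 1)) = q ^ (-z) / q := by
    rw [neg_add, Real.rpow_add h0, Real.rpow_neg_one]; rfl
  have e2 : q ^ (1 - (z + 1)) = q ^ (-z) := by ring_nf
  have e3 : q ^ (1 - z) = q * q ^ (-z) := by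
    rw [sub_eq_add_neg, Real.rpow_add h0, Real.rpow_one]
  have e4 : q ^ (-z) * q ^ z = 1 := by rw [← Real.rpow_add h0]; simp
  rw [e1, e2, e3, mul_sub (q ^ (-z)), e4]
  generalize q ^ (-z) = P
  field_simp
  ring

lemma tendsto_stepFq {z : ℝ} (hz : 0 < z) :
    Filter.Tendsto (fun q => stepFq q z) (nhdsWithin 1 (Set.Ioo 0 1)) (nhds (Real.log z)) := by
  have hle : nhdsWithin (1 : ℝ) (Set.Ioo 0 1) ≤ nhdsWithin 1 {1}ᶜ :=
    nhdsWithin_mono _ fun x hx => hx.2.ne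
  have hd : HasDerivAt (fun q : ℝ => q ^ z) z 1 := by
    simpa using Real.hasDerivAt_rpow_const (x := 1) (p := z) (Or.inl one_ne_zero)
  have hslope : Filter.Tendsto (fun q : ℝ => (1 - q ^ z) / (1 - q))
      (nhdsWithin 1 (Set.Ioo 0 1)) (nhds z) := by
    refine ((hasDerivAt_iff_tendsto_slope.1 hd).mono_left hle).congr fun q => ?_
    rw [slope_def_field, Real.one_rpow, ← neg_sub, ← neg_sub (1 : ℝ) q, neg_div_neg_eq]
  have h2 : Filter.Tendsto (fun q : ℝ => q ^ (-z)) (nhdsWithin 1 (Set.Ioo 0 1)) (nhds 1) := by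
    have := (Real.continuousAt_rpow_const 1 (-z) (Or.inl one_ne_zero)).tendsto
    rw [Real.one_rpow] at this
    exact this.mono_left nhdsWithin_le_nhds
  have h3 : Filter.Tendsto Real.log (nhdsWithin 1 (Set.Ioo 0 1)) (nhds 0) := by
    have := (Real.continuousAt_log one_ne_zero).tendsto
    rw [Real.log_one] at this
    exact this.mono_left nhdsWithin_le_nhds
  simpa [stepFq] using h2.mul ((hslope.log hz.ne').sub (h3.const_mul z))

lemma convexOn_rpow_mul (h0 : 0 < q) (c : ℝ) (s : Set ℝ) (hs : Convex ℝ s) :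
    ConvexOn ℝ s (fun z : ℝ => q ^ (z * c)) := by
  have h := (convexOn_exp.comp_linearMap (LinearMap.mulLeft ℝ (Real.log q * c))).subset
    (Set.subset_univ s) hs
  refine h.congr fun z _ => ?_
  simp only [Function.comp, LinearMap.mulLeft_apply]
  rw [Real.rpow_def_of_pos h0]; ring_nf

lemma convexOn_series (h0 : 0 < q) (h1 : q < 1) :
    ConvexOn ℝ (Set.Ioi 0) (fun z : ℝ => ∑' n : ℕ, (1 / ((n : ℝ) + 2)) *
      (q ^ (z * ((n : ℝ) + 1)) - q ^ ((n : ℝ) + 1)) / (1 - q ^ ((n : ℝ) + 1))) := by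
  refine ⟨convex_Ioi 0, fun x hx y hy a b ha hb hab => ?_⟩
  have hxy : a • x + b • y ∈ Set.Ioi (0 : ℝ) := convex_Ioi 0 hx hy ha hb hab
  simp only [smul_eq_mul] at hxy ⊢
  have sx := (summable_Fq h0 h1 hx).mul_left a
  have sy := (summable_Fq h0 h1 hy).mul_left b
  rw [← tsum_mul_left, ← tsum_mul_left, ← sx.tsum_add sy]
  refine (summable_Fq h0 h1 hxy).tsum_le_tsum (fun n => ?_) (sx.add sy)
  have hn : 0 < 1 - q ^ ((n : ℝ) + 1) := by linarith [rpow_nat_succ_lt_one h0 h1 n]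
  have hcv := (convexOn_rpow_mul h0 ((n : ℝ) + 1) Set.univ convex_univ).2
    (Set.mem_univ x) (Set.mem_univ y) ha hb hab
  simp only [smul_eq_mul] at hcv
  set Q := q ^ ((n : ℝ) + 1)
  have e : ∀ X Y : ℝ, a * (1 / ((n : ℝ) + 2) * (X - Q) / (1 - Q))
      + b * (1 / ((n : ℝ) + 2) * (Y - Q) / (1 - Q))
      = 1 / ((n : ℝ) + 2) * ((a * X + b * Y) - Q) / (1 - Q) := by
    intro X Y
    have hb' : b = 1 - a := by linarith
    subst hb'; ring
  rw [e]
  gcongr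

/-- With `a = -log q` and `ε = 1 - q`, the second derivative is
`e^{az} a (a ε z + (2 ε - a))`, and `q a ≤ ε` gives `a ≤ 2 ε` once `q ≥ 1/2`. -/
lemma convexOn_rpow_neg_mul (h0 : 1 / 2 ≤ q) (h1 : q < 1) :
    ConvexOn ℝ (Set.Ioi 0) (fun z : ℝ => q ^ (-z) * ((1 - q) * z - 1)) := by
  have hq : 0 < q := by linarith
  obtain ⟨a, ha⟩ : ∃ a, a = -Real.log q := ⟨_, rfl⟩
  obtain ⟨ε, hε⟩ : ∃ ε, ε = 1 - q := ⟨_, rfl⟩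
  have ha0 : 0 < a := by rw [ha]; linarith [Real.log_neg hq h1]
  have hε0 : 0 < ε := by linarith
  have hle : a ≤ 2 * ε := by
    have h := Real.one_sub_inv_le_log_of_pos hq
    have h2 : q⁻¹ * (1 - q) ≤ 2 * (1 - q) := by
      have : q⁻¹ ≤ 2 := by
        rw [inv_le_comm₀ hq two_pos]; linarith
      exact mul_le_mul_of_nonneg_right this (by linarith)
    rw [mul_sub, mul_one, inv_mul_cancel₀ hq.ne'] at h2
    rw [ha, hε]; linarith
  have hexp : ∀ z : ℝ, HasDerivAt (fun z => Real.exp (a * z)) (Real.exp (a * z) * a) z := by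
    intro z
    simpa using ((hasDerivAt_id z).const_mul a).exp
  have hd : ∀ c d z : ℝ, HasDerivAt (fun z => Real.exp (a * z) * (c * z + d))
      (Real.exp (a * z) * ((a * c) * z + (a * d + c))) z := by
    intro c d z
    have h2 : HasDerivAt (fun z => c * z + d) c z := by
      simpa using ((hasDerivAt_id z).const_mul c).add_const d
    exact ((hexp z).mul h2).congr_deriv (by ring)
  have hcv : ConvexOn ℝ (Set.Ioi 0) (fun z : ℝ => Real.exp (a * z) * (ε * z + (-1))) := by
    refine convexOn_of_hasDerivWithinAt2_nonneg (convex_Ioi 0)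
      (fun z _ => (hd _ _ z).continuousAt.continuousWithinAt)
      (fun z _ => (hd _ _ z).hasDerivWithinAt) (fun z _ => (hd _ _ z).hasDerivWithinAt) ?_
    intro z hz
    rw [interior_Ioi] at hz
    have hz' : 0 < z := hz
    have e : a * (a * ε) * z + (a * (a * -1 + ε) + a * ε) = a * (a * ε * z + (2 * ε - a)) := by
      ring
    rw [e]
    have : 0 ≤ 2 * ε - a := by linarith
    positivity
  refine hcv.congr fun z _ => ?_
  simp only
  rw [Real.rpow_def_of_pos hq, ha, hε]
  ring_nf

/-- Every part of `Fq q` is convex for `q ∈ [1/2, 1)`: the coefficients `-q log q / (1-q)²` and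
`-q log (1-q) / (1-q)` of the two non-affine closed-form parts are nonnegative. -/
lemma convexOn_Fq (h0 : 1 / 2 ≤ q) (h1 : q < 1) : ConvexOn ℝ (Set.Ioi 0) (Fq q) := by
  have hq : 0 < q := by linarith
  have hq1 : 0 < 1 - q := by linarith
  have hlog : Real.log q ≤ 0 := Real.log_nonpos hq.le h1.le
  have hlog1 : Real.log (1 - q) ≤ 0 := Real.log_nonpos hq1.le (by linarith)
  have c1 : 0 ≤ q * (-Real.log q) / (1 - q) ^ 2 := by
    have : 0 ≤ -Real.log q := by linarith
    positivity
  have c2 : 0 ≤ q * (-Real.log (1 - q)) / (1 - q) := by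
    have : 0 ≤ -Real.log (1 - q) := by linarith
    positivity
  have t1 := (convexOn_rpow_neg_mul h0 h1).smul c1
  have t2 := (convexOn_rpow_mul hq (-1) (Set.Ioi 0) (convex_Ioi 0)).smul c2
  have t3 : ConvexOn ℝ (Set.Ioi (0 : ℝ)) (fun z : ℝ => -z) := by
    exact (concaveOn_id (𝕜 := ℝ) (convex_Ioi (0 : ℝ))).neg
  have t := (((convexOn_series hq h1).add t1).add t2).add
    (t3.add_const (1 - q * Real.log q / (1 - q) ^ 2 + Real.log (1 - q) / (1 - q)))
  refine t.congr fun z _ => ?_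
  have e3 : q ^ (1 - z) = q * q ^ (-z) := by
    rw [sub_eq_add_neg, Real.rpow_add hq, Real.rpow_one]
  simp only [Pi.add_apply, smul_eq_mul, Fq, e3, mul_neg_one]
  ring

end FqFacts

/-- For real `z > 0`: `lim_{q↑1} Γ̃_q(z) = Γ(z)`, the limit being over real `q`
increasing to `1` (within `(0,1)`), where `Γ` is the Euler gamma function. -/
theorem tendsto_GammaQ_Gamma (z : ℝ) (hz : 0 < z) :
    Filter.Tendsto (fun q : ℝ => GammaQ q z)
      (nhdsWithin 1 (Set.Ioo 0 1)) (nhds (Real.Gamma z)) := by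
  have hmem : ∀ᶠ q in nhdsWithin (1 : ℝ) (Set.Ioo 0 1), q ∈ Set.Ioo (0 : ℝ) 1 :=
    self_mem_nhdsWithin
  have hhalf : ∀ᶠ q in nhdsWithin (1 : ℝ) (Set.Ioo 0 1), 1 / 2 ≤ q :=
    nhdsWithin_le_nhds (le_mem_nhds (by norm_num))
  have h : Filter.Tendsto (fun q => Fq q z) (nhdsWithin 1 (Set.Ioo 0 1))
      (nhds (Real.log (Real.Gamma z))) := by
    refine tendsto_log_Gamma_of_step (f := Fq) (L := stepFq) ?_ ?_ ?_
      (fun y hy => tendsto_stepFq hy) hz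
    · filter_upwards [hmem, hhalf] with q hq hq2
      exact convexOn_Fq hq2 hq.2
    · filter_upwards [hmem] with q hq y hy
      exact Fq_add_one hq.1 hq.2 hy
    · filter_upwards [hmem] with q hq
      exact Fq_one hq.1.ne'
  have he := (Real.continuous_exp.tendsto _).comp h
  rwa [Real.exp_log (Real.Gamma_pos_of_pos hz)] at he
end
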